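/- Let n ≥ 4 be an even integer and let c ∈ F_{2^n} be a nonzero cube (i.e., c = u^3 for some u ∈ F_{2^n}^*) with c ≠ 1. Let G : F_{2^n} → F_{2^n} be given by G(x) = x^{2^n−2} + x. Then the c-differential uniformity of G satisfies δ_{G,c} = 5. -/

import Mathlib

open Finset

/-- The `(c,a,b)` entry of the `c`-Difference Distribution Table of `G`:
the number of `x` with `G (x + a) - c * G x = b`. -/
def cddt {F : Type*} [Field F] [Fintype F] [DecidableEq F]
    (G : F → F) (c a b : F) : ℕ :=
  (Finset.univ.filter fun x : F => G (x + a) - c * G x = b).card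

/-- The `c`-differential uniformity of `G`: the maximum entry of the `c`-DDT,
where `a ≠ 0` is required only when `c = 1`. -/
def cdu {F : Type*} [Field F] [Fintype F] [DecidableEq F]
    (G : F → F) (c : F) : ℕ :=
  ((Finset.univ : Finset (F × F)).filter fun p => c = 1 → p.1 ≠ 0).sup
    fun p => cddt G c p.1 p.2

/-!
Write `G x = x⁻¹ + x`. Away from `x = 0` and `x = -a`, clearing denominators turns
`G (x + a) - c * G x = b` into a cubic equation with leading coefficient `1 - c`, so it has at most
`2 + 3` solutions. In characteristic two `G x = (x + 1) ^ 2 / x`, hence for `(a, b) = (1, 0)` both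
exceptional points are solutions, and the equation at the other points reads
`(x / (x + 1)) ^ 3 = c`. As `x ↦ x / (x + 1)` is an involution away from `1`, these solutions
correspond to the cube roots of `c`, of which there are three when `c` is a nonzero cube and the
field contains a primitive cube root of unity.
-/

open Polynomial

lemma card_nthRootsFinset_pow {R : Type*} [CommRing R] [IsDomain R] {ζ u : R} {m : ℕ}
    (hζ : IsPrimitiveRoot ζ m) (hu : u ≠ 0) : #(nthRootsFinset m (u ^ m)) = m := by
  classical
  rw [nthRootsFinset_def, Multiset.toFinset_card_of_nodup (hζ.nthRoots_nodup (pow_ne_zero m hu)),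
    hζ.card_nthRoots, if_pos ⟨u, rfl⟩]

section FiniteField

variable {K : Type*} [Field K] [Fintype K]

lemma pow_card_sub_two_eq_inv (hK : 2 < Fintype.card K) (x : K) :
    x ^ (Fintype.card K - 2) = x⁻¹ := by
  rcases eq_or_ne x 0 with rfl | hx
  · rw [inv_zero, zero_pow (by lia)]
  · apply eq_inv_of_mul_eq_one_left
    rw [← pow_succ, show Fintype.card K - 2 + 1 = Fintype.card K - 1 by lia]
    exact FiniteField.pow_card_sub_one_eq_one x hx

lemma exists_isPrimitiveRoot_of_dvd_card_sub_one {m : ℕ}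
    (hm : m ∣ Fintype.card K - 1) : ∃ ζ : K, IsPrimitiveRoot ζ m := by
  classical
  obtain ⟨k, hk⟩ := hm
  obtain ⟨g, hg⟩ := IsCyclic.exists_ofOrder_eq_natCard (α := Kˣ)
  have hg_prim : IsPrimitiveRoot (g : K) (Fintype.card K - 1) := by
    rw [← Fintype.card_units, ← Nat.card_eq_fintype_card, ← hg]
    exact IsPrimitiveRoot.coe_units_iff.mpr (IsPrimitiveRoot.orderOf g)
  have hpos : 0 < Fintype.card K - 1 := Nat.sub_pos_of_lt Fintype.one_lt_card
  exact ⟨g ^ k, hg_prim.pow hpos (hk.trans (mul_comm m k))⟩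

end FiniteField

section CharTwo

variable {K : Type*} [Field K] [CharP K 2]

lemma inv_add_self_eq_add_one_sq_div (x : K) : x⁻¹ + x = (x + 1) ^ 2 / x := by
  rcases eq_or_ne x 0 with rfl | hx
  · simp
  · rw [CharTwo.add_sq]
    field_simp
    ring

lemma div_add_one_div_add_one {x : K} (hx : x ≠ 1) :
    x / (x + 1) / (x / (x + 1) + 1) = x := by
  have hx1 : x + 1 ≠ 0 := mt CharTwo.add_eq_zero.mp hx
  have hsum : x / (x + 1) + 1 = 1 / (x + 1) := by
    rw [div_add_one hx1, ← add_assoc, CharTwo.add_self_eq_zero, zero_add]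
  rw [hsum, div_div_div_cancel_right₀ hx1, div_one]

lemma inv_add_self_sub_mul_eq_zero_iff {x : K} (hx0 : x ≠ 0) (hx1 : x ≠ 1) (c : K) :
    (x + 1)⁻¹ + (x + 1) - c * (x⁻¹ + x) = 0 ↔ (x / (x + 1)) ^ 3 = c := by
  have hx : x + 1 ≠ 0 := mt CharTwo.add_eq_zero.mp hx1
  rw [inv_add_self_eq_add_one_sq_div, inv_add_self_eq_add_one_sq_div, CharTwo.add_cancel_right,
    sub_eq_zero, ← mul_div_assoc, div_eq_div_iff hx hx0, div_pow, div_eq_iff (pow_ne_zero 3 hx)]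
  ring_nf

lemma card_filter_div_add_one_pow [Fintype K] [DecidableEq K] {m : ℕ} (hm : 0 < m) {c : K}
    (hc0 : c ≠ 0) (hc1 : c ≠ 1) :
    #{x : K | (x / (x + 1)) ^ m = c} = #(nthRootsFinset m c) := by
  have hne_one {x : K} (hx : (x / (x + 1)) ^ m = c) : x ≠ 1 := by
    rintro rfl
    rw [CharTwo.add_self_eq_zero, div_zero, zero_pow hm.ne'] at hx
    exact hc0 hx.symm
  have hroot_ne_one {t : K} (ht : t ^ m = c) : t ≠ 1 := by
    rintro rfl
    exact hc1 (ht.symm.trans (one_pow m))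
  refine card_nbij' (fun x ↦ x / (x + 1)) (fun t ↦ t / (t + 1)) ?_ ?_ ?_ ?_
  · intro x hx
    simpa [mem_nthRootsFinset hm] using hx
  · intro t ht
    have ht : t ^ m = c := by simpa [mem_nthRootsFinset hm] using ht
    simpa [div_add_one_div_add_one (hroot_ne_one ht)] using ht
  · intro x hx
    exact div_add_one_div_add_one (hne_one (by simpa using hx))
  · intro t ht
    exact div_add_one_div_add_one (hroot_ne_one ((mem_nthRootsFinset hm c).mp ht))

end CharTwo

section DifferenceTable

variable {F : Type*} [Field F] [Fintype F] [DecidableEq F]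

lemma cddt_le_cdu (G : F → F) {c a : F} (ha : c = 1 → a ≠ 0) (b : F) :
    cddt G c a b ≤ cdu G c :=
  le_sup (f := fun p : F × F ↦ cddt G c p.1 p.2) (b := (a, b)) (by simpa using ha)

lemma cddt_inv_add_self_le_five {c : F} (hc : c ≠ 1) (a b : F) :
    cddt (fun x ↦ x⁻¹ + x) c a b ≤ 5 := by
  let P : Cubic F := ⟨1 - c, (1 - c) * a + a - b, 1 + a ^ 2 - c - a * b, -(c * a)⟩
  have hP : P.toPoly ≠ 0 := Cubic.ne_zero_of_a_ne_zero (sub_ne_zero.mpr hc.symm)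
  have hsub : (univ.filter fun x : F ↦ (x + a)⁻¹ + (x + a) - c * (x⁻¹ + x) = b) ⊆
      {0, -a} ∪ P.roots.toFinset := by
    intro x hx
    simp only [mem_filter_univ, mem_union, mem_insert, mem_singleton, Multiset.mem_toFinset,
      Cubic.mem_roots_iff hP] at hx ⊢
    by_cases hx0 : x = 0
    · exact .inl (.inl hx0)
    by_cases hxa : x + a = 0
    · exact .inl (.inr (eq_neg_of_add_eq_zero_left hxa))
    · right
      field_simp at hx
      linear_combination hx
  calc cddt (fun x ↦ x⁻¹ + x) c a b
      ≤ #({0, -a} ∪ P.roots.toFinset) := card_le_card hsub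
    _ ≤ #{0, -a} + #P.roots.toFinset := card_union_le _ _
    _ ≤ 2 + 3 := Nat.add_le_add card_le_two Cubic.card_roots_le

lemma cddt_inv_add_self_one_zero [CharP F 2] {c : F} (hc0 : c ≠ 0) (hc1 : c ≠ 1) :
    cddt (fun x ↦ x⁻¹ + x) c 1 0 = #(nthRootsFinset 3 c) + 2 := by
  have hfiber : (univ.filter fun x : F ↦ (x + 1)⁻¹ + (x + 1) - c * (x⁻¹ + x) = 0) =
      insert 0 (insert 1 (univ.filter fun x : F ↦ (x / (x + 1)) ^ 3 = c)) := by
    ext x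
    simp only [mem_filter_univ, mem_insert]
    rcases eq_or_ne x 0 with rfl | hx0
    · simp [CharTwo.add_self_eq_zero]
    rcases eq_or_ne x 1 with rfl | hx1
    · simp [CharTwo.add_self_eq_zero]
    · simp only [hx0, hx1, false_or, inv_add_self_sub_mul_eq_zero_iff hx0 hx1]
  rw [cddt, hfiber, card_insert_of_notMem, card_insert_of_notMem,
    card_filter_div_add_one_pow three_pos hc0 hc1]
  · simpa [CharTwo.add_self_eq_zero] using hc0.symm
  · simpa using hc0.symm

end DifferenceTable

theorem cdu_eq_five_for_cubes
    {F : Type*} [Field F] [Fintype F] [DecidableEq F]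
    (n : ℕ) (hn : 4 ≤ n) (hneven : Even n)
    (hF : Fintype.card F = 2 ^ n)
    (c : F) (hcube : ∃ u : F, u ≠ 0 ∧ c = u ^ 3) (hc : c ≠ 1)
    (G : F → F) (hG : ∀ x : F, G x = x ^ (2 ^ n - 2) + x) :
    cdu G c = 5 := by
  have : CharP F 2 := charP_of_card_eq_prime_pow hF
  have hcard : 2 < Fintype.card F := hF ▸ lt_self_pow₀ one_lt_two (by lia)
  have hG_inv : G = fun x ↦ x⁻¹ + x :=
    funext fun x ↦ by rw [hG, ← hF, pow_card_sub_two_eq_inv hcard]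
  have hthree : 3 ∣ Fintype.card F - 1 := hF ▸ Nat.pow_sub_one_dvd_pow_sub_one 2 hneven.two_dvd
  obtain ⟨ζ, hζ⟩ := exists_isPrimitiveRoot_of_dvd_card_sub_one hthree
  obtain ⟨u, hu, rfl⟩ := hcube
  subst hG_inv
  apply le_antisymm
  · exact Finset.sup_le fun p _ ↦ cddt_inv_add_self_le_five hc p.1 p.2
  · calc 5 = #(nthRootsFinset 3 (u ^ 3)) + 2 := by rw [card_nthRootsFinset_pow hζ hu]
      _ = cddt (fun x ↦ x⁻¹ + x) (u ^ 3) 1 0 :=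
        (cddt_inv_add_self_one_zero (pow_ne_zero 3 hu) hc).symm
      _ ≤ cdu (fun x ↦ x⁻¹ + x) (u ^ 3) := cddt_le_cdu _ (fun h ↦ absurd h hc) 0
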